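/- Let W, S ∈ OSp(2N,ℝ) = Sp(2N,ℝ) ∩ O(2N) satisfy WᵀS = SᵀW. Then there exists an integer m with 0 ≤ m ≤ N such that Tr[(S − W)ᵀ(S − W)] = 8m. In particular, the critical values of the cost function 𝒥 restricted to OSp(2N,ℝ) all lie in the set {0, 8, 16, …, 8N}, the minimum value 0 being attained at S = W. -/

import Mathlib

open Matrix

/-- `J` denotes the 2N×2N real matrix with block form [[0, I_N], [−I_N, 0]]. -/
noncomputable def J (N : ℕ) : Matrix (Fin N ⊕ Fin N) (Fin N ⊕ Fin N) ℝ :=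
  Matrix.fromBlocks 0 1 (-1) 0

/-!
The critical point condition makes `A = WᵀS` a symplectic involution, so `P = (1 - A) / 2` is a
projection and `𝒥(S) = 2 Tr (1 - A) = 4 rank P`. The rank of `P` is even because
`(-1) ^ rank P = det (1 - 2P) = det A`, and symplectic matrices have determinant one.
-/

section Idempotent

theorem det_one_add_smul_of_isProj {R M : Type*} [CommRing R] [AddCommGroup M] [Module R M]
    {p : Submodule R M} {f : M →ₗ[R] M} (hf : LinearMap.IsProj p f)
    [Module.Free R p] [Module.Finite R p]
    [Module.Free R (LinearMap.ker f)] [Module.Finite R (LinearMap.ker f)] (c : R) :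
    LinearMap.det (1 + c • f) = (1 + c) ^ Module.finrank R p := by
  let e := p.prodEquivOfIsCompl (LinearMap.ker f) hf.isCompl
  have conj_eq : 1 + c • f = e.conj (((1 + c) • LinearMap.id).prodMap LinearMap.id) := by
    have hprod : ((1 + c) • LinearMap.id).prodMap LinearMap.id =
        (1 : Module.End R (p × LinearMap.ker f)) + c • LinearMap.id.prodMap 0 := by
      ext <;> simp [add_smul]
    rw [hprod, map_add, map_smul, ← hf.eq_conj_prodMap, Module.End.one_eq_id,
      Module.End.one_eq_id, LinearEquiv.conj_id]
  rw [conj_eq, LinearEquiv.conj_apply, LinearMap.comp_assoc, LinearMap.det_conj,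
    LinearMap.det_prodMap, LinearMap.det_smul, LinearMap.det_id, LinearMap.det_id, mul_one, mul_one]

variable {K n : Type*} [Field K] [Fintype n] {P : Matrix n n K}

theorem isProj_range_mulVecLin_of_isIdempotentElem (hP : IsIdempotentElem P) :
    LinearMap.IsProj (LinearMap.range P.mulVecLin) P.mulVecLin :=
  LinearMap.IsIdempotentElem.isProj_range _ <| by
    rw [IsIdempotentElem, Module.End.mul_eq_comp, ← mulVecLin_mul, hP]

theorem trace_eq_rank_of_isIdempotentElem (hP : IsIdempotentElem P) :
    P.trace = (P.rank : K) := by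
  classical
  exact (trace_toLin'_eq P).symm.trans (isProj_range_mulVecLin_of_isIdempotentElem hP).trace

theorem det_one_add_smul_of_isIdempotentElem [DecidableEq n] (hP : IsIdempotentElem P) (c : K) :
    (1 + c • P).det = (1 + c) ^ P.rank := by
  rw [← LinearMap.det_toLin', map_add, map_smul, toLin'_one]
  exact det_one_add_smul_of_isProj (isProj_range_mulVecLin_of_isIdempotentElem hP) c

theorem isIdempotentElem_half_smul_one_sub [NeZero (2 : K)] {A : Type*} [Ring A] [Algebra K A]
    {a : A} (ha : a * a = 1) : IsIdempotentElem ((2⁻¹ : K) • (1 - a)) := by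
  have hsq : (1 - a) * (1 - a) = (2 : K) • (1 - a) := by
    rw [two_smul, sub_mul, mul_sub, mul_sub, ha]
    simp only [one_mul, mul_one]
    abel
  rw [IsIdempotentElem, smul_mul_smul_comm, hsq, smul_smul,
    inv_mul_cancel_right₀ two_ne_zero]

end Idempotent

section Orthogonal

variable {n R : Type*} [Fintype n] [DecidableEq n] [CommRing R] {W S : Matrix n n R}

theorem transpose_mul_mul_self_eq_one (hW : W ∈ orthogonalGroup n R)
    (hS : S ∈ orthogonalGroup n R) (hcrit : Wᵀ * S = Sᵀ * W) :
    (Wᵀ * S) * (Wᵀ * S) = 1 :=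
  calc (Wᵀ * S) * (Wᵀ * S) = (Wᵀ * S) * (Sᵀ * W) := by rw [← hcrit]
    _ = Wᵀ * (S * Sᵀ) * W := by simp only [Matrix.mul_assoc]
    _ = 1 := by
      rw [(mem_orthogonalGroup_iff n R).1 hS, Matrix.mul_one, (mem_orthogonalGroup_iff' n R).1 hW]

theorem trace_transpose_sub_mul_sub (hW : W ∈ orthogonalGroup n R)
    (hS : S ∈ orthogonalGroup n R) :
    ((S - W)ᵀ * (S - W)).trace = 2 * (1 - Wᵀ * S).trace := by
  have hcross : (Sᵀ * W).trace = (Wᵀ * S).trace := by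
    rw [← trace_transpose, transpose_mul, transpose_transpose]
  rw [transpose_sub, Matrix.sub_mul, Matrix.mul_sub, Matrix.mul_sub,
    (mem_orthogonalGroup_iff' n R).1 hW, (mem_orthogonalGroup_iff' n R).1 hS]
  simp only [trace_sub, hcross]
  ring

end Orthogonal

section Symplectic

variable {l K : Type*} [Fintype l] [DecidableEq l] [Field K] [NeZero (2 : K)]

theorem even_rank_of_one_add_neg_two_smul_mem_symplecticGroup {P : Matrix (l ⊕ l) (l ⊕ l) K}
    (hP : IsIdempotentElem P) (hsymp : 1 + (-2 : K) • P ∈ symplecticGroup l K) :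
    Even P.rank := by
  have hdet : (-1 : K) ^ P.rank = 1 :=
    calc (-1 : K) ^ P.rank = (1 + -2) ^ P.rank := by norm_num
      _ = (1 + (-2 : K) • P).det := (det_one_add_smul_of_isIdempotentElem hP _).symm
      _ = 1 := SymplecticGroup.det_eq_one hsymp
  have neg_one_ne_one : (-1 : K) ≠ 1 := fun h =>
    two_ne_zero (α := K) (by linear_combination -h)
  exact (neg_one_pow_eq_one_iff_even neg_one_ne_one).1 hdet

theorem stmt_18_general {W S : Matrix (l ⊕ l) (l ⊕ l) K}
    (hWsymp : W ∈ symplecticGroup l K) (hWorth : W ∈ orthogonalGroup (l ⊕ l) K)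
    (hSsymp : S ∈ symplecticGroup l K) (hSorth : S ∈ orthogonalGroup (l ⊕ l) K)
    (hcrit : Wᵀ * S = Sᵀ * W) :
    ∃ m : ℕ, m ≤ Fintype.card l ∧ ((S - W)ᵀ * (S - W)).trace = 8 * (m : K) := by
  set P := (2⁻¹ : K) • (1 - Wᵀ * S)
  have hP : IsIdempotentElem P :=
    isIdempotentElem_half_smul_one_sub (transpose_mul_mul_self_eq_one hWorth hSorth hcrit)
  have two_smul_P : (2 : K) • P = 1 - Wᵀ * S := smul_inv_smul₀ two_ne_zero _
  have hsymp : 1 + (-2 : K) • P ∈ symplecticGroup l K := by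
    rw [neg_smul, two_smul_P, neg_sub, add_sub_cancel]
    exact mul_mem (SymplecticGroup.transpose_mem hWsymp) hSsymp
  obtain ⟨m, hm⟩ := even_rank_of_one_add_neg_two_smul_mem_symplecticGroup hP hsymp
  have rank_le : P.rank ≤ Fintype.card l + Fintype.card l :=
    P.rank_le_card_width.trans_eq Fintype.card_sum
  refine ⟨m, by lia, ?_⟩
  rw [trace_transpose_sub_mul_sub hWorth hSorth, ← two_smul_P, trace_smul,
    trace_eq_rank_of_isIdempotentElem hP, hm, smul_eq_mul]
  push_cast
  ring

end Symplectic

theorem J_eq_neg_matrix_J (N : ℕ) : _root_.J N = -Matrix.J (Fin N) ℝ := by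
  simp [_root_.J, Matrix.J, fromBlocks_neg]

theorem mem_symplecticGroup_iff_transpose_mul_J_mul {N : ℕ}
    {A : Matrix (Fin N ⊕ Fin N) (Fin N ⊕ Fin N) ℝ} :
    A ∈ symplecticGroup (Fin N) ℝ ↔ Aᵀ * _root_.J N * A = _root_.J N := by
  rw [SymplecticGroup.mem_iff', J_eq_neg_matrix_J, Matrix.mul_neg, Matrix.neg_mul, neg_inj]

/-- Critical values of the cost on the orthogonal symplectic group: if
`W, S ∈ OSp(2N,ℝ)` satisfy `WᵀS = SᵀW`, then `Tr[(S − W)ᵀ(S − W)] = 8m` for some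
`0 ≤ m ≤ N`; in particular the critical values lie in `{0, 8, 16, …, 8N}`. -/
theorem stmt_18 (N : ℕ) (W S : Matrix (Fin N ⊕ Fin N) (Fin N ⊕ Fin N) ℝ)
    (hWsymp : Wᵀ * J N * W = J N) (hWorth : Wᵀ * W = 1)
    (hSsymp : Sᵀ * J N * S = J N) (hSorth : Sᵀ * S = 1)
    (hcrit : Wᵀ * S = Sᵀ * W) :
    ∃ m : ℕ, m ≤ N ∧ ((S - W)ᵀ * (S - W)).trace = 8 * (m : ℝ) := by
  simpa only [Fintype.card_fin] using stmt_18_general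
    (mem_symplecticGroup_iff_transpose_mul_J_mul.2 hWsymp) ((mem_orthogonalGroup_iff' _ _).2 hWorth)
    (mem_symplecticGroup_iff_transpose_mul_J_mul.2 hSsymp) ((mem_orthogonalGroup_iff' _ _).2 hSorth)
    hcrit
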